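/- For every K = |𝒳| ≥ 2 and every positive integer M such that M^{1/(K-1)} ≥ 4 is an integer, the degrading cost satisfies DC(K, M) ≤ 1268 · (K-1) · M^{-2/(K-1)}. -/

import Mathlib

/-!
For every joint law `p` of `(X, Y)` with `|𝒳| = k + 1` there is an `m ^ k`-level quantizer of `Y`
losing at most `25 k / m²` nats of mutual information, and `25 / log 2 ≤ 1268`.

* Binary codebook (`binary_codebook`). A law `(t, 1 - t)` with `t ≤ 1/2` is rounded to
  `q = v² / 2`, where `v` is the multiple of `1 / n` just above `√(2t)`, `n = ⌊m/2⌋`; for `t > 1/2`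
  the roles of the two letters are exchanged. As relative entropy is at most the `χ²`-divergence,
  the cost is at most `(t - q)² / (q (1 - q)) ≤ 4 / n² ≤ 25 / m²`.
* Codebook on `k + 1` letters (`codebook`). Revealing `X` one letter at a time ("is `X = 0`? if
  not, is `X = 1`? …") and applying the binary codebook to each of the `k` conditional laws gives
  `m ^ k` laws `Q c`, one of which is within relative entropy `25 k / m²` of any given law,
  by the chain rule.
* Quantizer (`exists_quantizer`). Send `y` to the index `f y` of a codeword close to `P_{X | Y = y}`.
  Then `I(X;Y) - I(X;f(Y)) = E[log (P(X|Y) / P(X|f(Y)))] ≤ E[log (P(X|Y) / Q_{f(Y)}(X))]` by Gibbs'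
  inequality, and the right-hand side is at most `25 k / m²`.
-/

open scoped BigOperators

/-- Mutual information (in bits) of a joint probability mass function `p` on `𝒳 × 𝒴`,
with the convention `0 · log 0 = 0`. -/
noncomputable def miBits {𝒳 𝒴 : Type*} (p : 𝒳 → 𝒴 → ℝ) : ℝ :=
  ∑' x, ∑' y, p x y * Real.logb 2 (p x y / ((∑' y', p x y') * (∑' x', p x' y)))

/-- `p` is a joint probability mass function. -/
def IsJointPMF {𝒳 𝒴 : Type*} (p : 𝒳 → 𝒴 → ℝ) : Prop :=
  (∀ x y, 0 ≤ p x y) ∧ Summable (fun xy : 𝒳 × 𝒴 => p xy.1 xy.2) ∧ (∑' x, ∑' y, p x y) = 1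

/-- Joint pmf of `(X, f(Y))` when `(X,Y) ~ p` and `f` is a deterministic `M`-level quantizer. -/
noncomputable def quantJoint {𝒳 𝒴 : Type*} (p : 𝒳 → 𝒴 → ℝ) {M : ℕ} (f : 𝒴 → Fin M) :
    𝒳 → Fin M → ℝ :=
  fun x m => ∑' y, if f y = m then p x y else 0

/-- `I(X;[Y]_M)`: the best mutual information achievable by a deterministic `M`-level
quantizer of `Y`. -/
noncomputable def quantMI {𝒳 𝒴 : Type*} (p : 𝒳 → 𝒴 → ℝ) (M : ℕ) : ℝ :=
  ⨆ f : 𝒴 → Fin M, miBits (quantJoint p f)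

/-- The information distillation function `ID_M(K, β)`. -/
noncomputable def ID (M K : ℕ) (β : ℝ) : ℝ :=
  sInf {v | ∃ p : Fin K → ℕ → ℝ, IsJointPMF p ∧ β ≤ miBits p ∧ v = quantMI p M}

/-- Binary entropy function (bits). -/
noncomputable def hBin (t : ℝ) : ℝ :=
  -(t * Real.logb 2 t) - (1 - t) * Real.logb 2 (1 - t)

/-- The degrading cost `DC(K, M)`. -/
noncomputable def DC (K M : ℕ) : ℝ :=
  sSup {v | ∃ β : ℝ, 0 < β ∧ β ≤ Real.logb 2 K ∧ v = β - ID M K β}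

/-! ### Codebooks for relative entropy -/

/-- The bound `log z ≤ z - 1` in the form used to compare relative entropy with `χ²`. -/
lemma mul_log_le {a b : ℝ} (ha : 0 ≤ a) (hb : 0 < b) :
    a * Real.log (a / b) ≤ a * (a / b) - a := by
  rcases ha.eq_or_lt with rfl | ha'
  · simp
  · have := Real.log_le_sub_one_of_pos (div_pos ha' hb)
    nlinarith

/-- The pointwise form of Gibbs' inequality. -/
lemma sub_le_mul_log {a b : ℝ} (ha : 0 ≤ a) (hb : 0 ≤ b) (hab : b = 0 → a = 0) :
    a - b ≤ a * Real.log (a / b) := by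
  rcases ha.eq_or_lt with rfl | ha'
  · simpa using hb
  · have hb' : 0 < b := lt_of_le_of_ne hb fun h => ha'.ne' (hab h.symm)
    have h1 := Real.log_le_sub_one_of_pos (div_pos hb' ha')
    have h2 : Real.log (a / b) = - Real.log (b / a) := by
      rw [← Real.log_inv, inv_div]
    have h3 : a * (b / a) = b := by field_simp
    rw [h2]
    nlinarith

/-- Unnormalized binary relative entropy is at most the `χ²`-divergence. -/
lemma binary_chi_sq {a b q : ℝ} (ha : 0 ≤ a) (hb : 0 ≤ b) (hs : 0 < a + b)
    (hq : 0 < q) (hq1 : q < 1) :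
    a * Real.log (a / ((a + b) * q)) + b * Real.log (b / ((a + b) * (1 - q)))
      ≤ (a + b) * ((a / (a + b) - q) ^ 2 / (q * (1 - q))) := by
  have h1 : 0 < 1 - q := by linarith
  have e1 := mul_log_le ha (mul_pos hs hq)
  have e2 := mul_log_le hb (mul_pos hs h1)
  have : (a + b) * ((a / (a + b) - q) ^ 2 / (q * (1 - q)))
      = (a * (a / ((a + b) * q)) - a) + (b * (b / ((a + b) * (1 - q))) - b) := by
    field_simp
    ring
  linarith

/-- Rounding `√(2t)` up to a multiple `(j + 1) / n` of `1 / n` costs at most `4 / n²` in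
`χ²`-divergence. The square-root scale compensates the factor `1 / q` in the divergence. -/
lemma half_codebook {n : ℕ} (hn : 1 ≤ n) {t : ℝ} (ht : 0 ≤ t) (ht2 : t ≤ 1 / 2) :
    ∃ j : ℕ, j < n ∧
      (t - (((j : ℝ) + 1) / n) ^ 2 / 2) ^ 2 /
        ((((j : ℝ) + 1) / n) ^ 2 / 2 * (1 - (((j : ℝ) + 1) / n) ^ 2 / 2)) ≤ 4 / (n : ℝ) ^ 2 := by
  have hn0 : (0 : ℝ) < n := by exact_mod_cast hn
  obtain ⟨u, hu⟩ : ∃ u, u = Real.sqrt (2 * t) := ⟨_, rfl⟩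
  have hu0 : 0 ≤ u := hu ▸ Real.sqrt_nonneg _
  have hu2 : u ^ 2 = 2 * t := by rw [hu]; exact Real.sq_sqrt (by linarith)
  have hu1 : u ≤ 1 := by nlinarith
  have hnu : 0 ≤ n * u := by positivity
  have hc1 : ⌈(n : ℝ) * u⌉₊ ≤ n := Nat.ceil_le.2 (by nlinarith)
  have hjn : ⌈(n : ℝ) * u⌉₊ - 1 < n := by omega
  refine ⟨⌈(n : ℝ) * u⌉₊ - 1, hjn, ?_⟩
  have hlow : (n : ℝ) * u ≤ ((⌈(n : ℝ) * u⌉₊ - 1 : ℕ) : ℝ) + 1 := by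
    refine (Nat.le_ceil _).trans ?_
    exact_mod_cast (by omega : ⌈(n : ℝ) * u⌉₊ ≤ ⌈(n : ℝ) * u⌉₊ - 1 + 1)
  have hup : ((⌈(n : ℝ) * u⌉₊ - 1 : ℕ) : ℝ) ≤ n * u := by
    -- truncated subtraction covers `u = 0`
    rcases Nat.eq_zero_or_pos ⌈(n : ℝ) * u⌉₊ with h | h
    · simpa [h] using hnu
    · rw [Nat.cast_sub h, Nat.cast_one]
      have := Nat.ceil_lt_add_one hnu
      linarith
  have hj1 : ((⌈(n : ℝ) * u⌉₊ - 1 : ℕ) : ℝ) + 1 ≤ n := by exact_mod_cast hjn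
  have hj0 : (0 : ℝ) ≤ ((⌈(n : ℝ) * u⌉₊ - 1 : ℕ) : ℝ) := Nat.cast_nonneg _
  generalize ((⌈(n : ℝ) * u⌉₊ - 1 : ℕ) : ℝ) = j at *
  obtain ⟨v, hv⟩ : ∃ v, v = (j + 1) / n := ⟨_, rfl⟩
  rw [← hv]
  have hv0 : 0 < v := by rw [hv]; positivity
  have hv1 : v ≤ 1 := by rw [hv, div_le_one hn0]; exact hj1
  have huv : u ≤ v := by rw [hv, le_div_iff₀ hn0]; linarith
  have hvu : n * (v - u) ≤ 1 := by
    have : n * v = j + 1 := by rw [hv]; field_simp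
    linarith
  have hden : 0 < v ^ 2 / 2 * (1 - v ^ 2 / 2) := by
    have : v ^ 2 ≤ 1 := by nlinarith
    have : 0 < 1 - v ^ 2 / 2 := by linarith
    positivity
  rw [div_le_div_iff₀ hden (by positivity)]
  have ht' : t = u ^ 2 / 2 := by linarith
  have k1 : (n * (v - u)) ^ 2 ≤ 1 := by
    have : 0 ≤ n * (v - u) := mul_nonneg hn0.le (by linarith)
    nlinarith
  have k2 : (v + u) ^ 2 ≤ 4 * v ^ 2 := by nlinarith
  have k3 : (n * (v - u)) ^ 2 * (v + u) ^ 2 ≤ 1 * (4 * v ^ 2) :=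
    mul_le_mul k1 k2 (by positivity) (by norm_num)
  have k4 : (t - v ^ 2 / 2) ^ 2 * (n : ℝ) ^ 2 = (n * (v - u)) ^ 2 * (v + u) ^ 2 / 4 := by
    rw [ht']; ring
  rw [k4]
  have : v ^ 2 ≤ 1 := by nlinarith
  nlinarith [mul_nonneg (sq_nonneg v) (sub_nonneg.2 this)]

/-- Indices below `n = ⌊m/2⌋` carry the reference laws with `q ≤ 1/2`, the next `n` their mirror
images; for odd `m` the last index carries a dummy value. -/
lemma binary_codebook {m : ℕ} (hm : 4 ≤ m) :
    ∃ q : Fin m → ℝ, (∀ c, 0 < q c ∧ q c < 1) ∧ ∀ a b : ℝ, 0 ≤ a → 0 ≤ b → ∃ c,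
      a * Real.log (a / ((a + b) * q c)) + b * Real.log (b / ((a + b) * (1 - q c)))
        ≤ (a + b) * (25 / (m : ℝ) ^ 2) := by
  obtain ⟨n, hn⟩ : ∃ n, n = m / 2 := ⟨_, rfl⟩
  have hn2 : 2 ≤ n := by omega
  have hnm : 2 * n ≤ m := by omega
  have hmn : m ≤ 2 * n + 1 := by omega
  have hn0 : (0 : ℝ) < n := by exact_mod_cast (by omega : 0 < n)
  have hm0 : (0 : ℝ) < m := by exact_mod_cast (by omega : 0 < m)
  have hrate : 4 / (n : ℝ) ^ 2 ≤ 25 / (m : ℝ) ^ 2 := by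
    have h1 : (m : ℝ) ≤ 2 * n + 1 := by exact_mod_cast hmn
    have h2 : (2 : ℝ) ≤ n := by exact_mod_cast hn2
    rw [div_le_div_iff₀ (by positivity) (by positivity)]
    nlinarith
  have hr : ∀ j : ℕ, j < n → 0 < (((j : ℝ) + 1) / n) ^ 2 / 2 ∧ (((j : ℝ) + 1) / n) ^ 2 / 2 < 1 := by
    intro j hj
    have h1 : ((j : ℝ) + 1) / n ≤ 1 := by
      rw [div_le_one hn0]; exact_mod_cast hj
    have h0 : 0 < ((j : ℝ) + 1) / n := by positivity
    constructor
    · positivity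
    · nlinarith
  refine ⟨fun c => if c.1 < n then (((c.1 : ℝ) + 1) / n) ^ 2 / 2 else
    if c.1 - n < n then 1 - ((((c.1 - n : ℕ) : ℝ) + 1) / n) ^ 2 / 2 else 1 / 2, ?_, ?_⟩
  · intro c
    dsimp only
    split_ifs with h1 h2
    · exact hr _ h1
    · have := hr _ h2
      constructor <;> linarith
    · norm_num
  · intro a b ha hb
    rcases (add_nonneg ha hb).eq_or_lt with hs | hs
    · have ha0 : a = 0 := by linarith
      have hb0 : b = 0 := by linarith
      exact ⟨⟨0, by omega⟩, by simp [ha0, hb0]⟩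
    have key : ∀ j : ℕ, ∀ t : ℝ, (t - (((j : ℝ) + 1) / n) ^ 2 / 2) ^ 2 /
        ((((j : ℝ) + 1) / n) ^ 2 / 2 * (1 - (((j : ℝ) + 1) / n) ^ 2 / 2)) ≤ 4 / (n : ℝ) ^ 2 →
        (a + b) * ((t - (((j : ℝ) + 1) / n) ^ 2 / 2) ^ 2 /
        ((((j : ℝ) + 1) / n) ^ 2 / 2 * (1 - (((j : ℝ) + 1) / n) ^ 2 / 2)))
        ≤ (a + b) * (25 / (m : ℝ) ^ 2) := fun j t h =>
      mul_le_mul_of_nonneg_left (h.trans hrate) hs.le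
    rcases le_total a b with hab | hab
    · obtain ⟨j, hj, hle⟩ := half_codebook (n := n) (by omega) (t := a / (a + b)) (by positivity)
        (by rw [div_le_iff₀ hs]; linarith)
      refine ⟨⟨j, by omega⟩, ?_⟩
      simp only [hj, if_true]
      exact (binary_chi_sq ha hb hs (hr j hj).1 (hr j hj).2).trans (key j _ hle)
    · obtain ⟨j, hj, hle⟩ := half_codebook (n := n) (by omega) (t := b / (a + b)) (by positivity)
        (by rw [div_le_iff₀ hs]; linarith)
      refine ⟨⟨n + j, by omega⟩, ?_⟩
      have e1 : ¬ (n + j < n) := by omega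
      have e2 : n + j - n = j := by omega
      simp only [e1, e2, hj, if_true, if_false, sub_sub_cancel]
      have h := binary_chi_sq hb ha (by linarith) (hr j hj).1 (hr j hj).2
      rw [add_comm b a] at h
      linarith [key j _ hle]

/-- Splitting off the mass of the remaining letters: `S` is the total mass, `p` the masses of the
remaining letters, and `r` the reference probability that one of these occurs. -/
lemma sum_mul_log_rescale {k : ℕ} (p Q : Fin k → ℝ) (hp : ∀ x, 0 ≤ p x) (hQ : ∀ x, 0 < Q x)
    {S r : ℝ} (hS : ∑ x, p x ≤ S) (hr : 0 < r) :
    ∑ x, p x * Real.log (p x / (S * (r * Q x)))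
      = (∑ x, p x) * Real.log ((∑ x, p x) / (S * r))
        + ∑ x, p x * Real.log (p x / ((∑ x, p x) * Q x)) := by
  rw [Finset.sum_mul, ← Finset.sum_add_distrib]
  refine Finset.sum_congr rfl fun x _ => ?_
  rcases (hp x).eq_or_lt with h0 | h0
  · simp [← h0]
  have hs : 0 < ∑ x, p x :=
    lt_of_lt_of_le h0 (Finset.single_le_sum (fun i _ => hp i) (Finset.mem_univ x))
  have hS0 : 0 < S := hs.trans_le hS
  have hq := hQ x
  rw [← mul_add, ← Real.log_mul (by positivity) (by positivity)]
  congr 2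
  field_simp

/-- The codebook on `k + 1` letters, stated for unnormalized laws `p`, by induction on `k` via the
chain rule for relative entropy. -/
lemma codebook {m : ℕ} (hm : 4 ≤ m) (k : ℕ) :
    ∃ Q : Fin (m ^ k) → Fin (k + 1) → ℝ, (∀ c x, 0 < Q c x) ∧ (∀ c, ∑ x, Q c x = 1) ∧
      ∀ p : Fin (k + 1) → ℝ, (∀ x, 0 ≤ p x) → ∃ c,
        ∑ x, p x * Real.log (p x / ((∑ x, p x) * Q c x))
          ≤ (∑ x, p x) * (k * (25 / (m : ℝ) ^ 2)) := by
  induction k with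
  | zero =>
    refine ⟨fun _ _ => 1, fun _ _ => one_pos, fun _ => by simp, fun p hp => ⟨⟨0, by simp⟩, ?_⟩⟩
    rcases (hp 0).eq_or_lt with h | h
    · simp [← h]
    · simp [div_self h.ne']
  | succ k ih =>
    obtain ⟨Q, hQ0, hQ1, hQ⟩ := ih
    obtain ⟨q, hq01, hq⟩ := binary_codebook hm
    have hcard : m ^ (k + 1) = m * m ^ k := by rw [pow_succ, mul_comm]
    -- an index on `k + 1` levels is a binary index followed by an index on `k` levels
    let e : Fin (m ^ (k + 1)) ≃ Fin m × Fin (m ^ k) :=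
      (finCongr hcard).trans finProdFinEquiv.symm
    refine ⟨fun c => Fin.cons (q (e c).1) fun x => (1 - q (e c).1) * Q (e c).2 x, ?_, ?_, ?_⟩
    · intro c x
      refine Fin.cases ?_ (fun x => ?_) x
      · simpa using (hq01 _).1
      · simpa using mul_pos (sub_pos.2 (hq01 (e c).1).2) (hQ0 (e c).2 x)
    · intro c
      rw [Fin.sum_univ_succ]
      simp [← Finset.mul_sum, hQ1]
    · intro p hp
      obtain ⟨c', hc'⟩ := hQ (fun x => p x.succ) fun x => hp _
      have hs0 : 0 ≤ ∑ x : Fin (k + 1), p x.succ := Finset.sum_nonneg fun x _ => hp _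
      obtain ⟨c, hc⟩ := hq (p 0) (∑ x : Fin (k + 1), p x.succ) (hp 0) hs0
      refine ⟨e.symm (c, c'), ?_⟩
      rw [Fin.sum_univ_succ (f := p), Fin.sum_univ_succ]
      simp only [Equiv.apply_symm_apply, Fin.cons_zero, Fin.cons_succ]
      rw [sum_mul_log_rescale (fun x => p x.succ) (Q c') (fun x => hp _) (hQ0 c')
        (S := p 0 + ∑ x : Fin (k + 1), p x.succ) (by linarith [hp 0]) (sub_pos.2 (hq01 c).2)]
      have hε : 0 ≤ (k : ℝ) * (25 / (m : ℝ) ^ 2) := by positivity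
      push_cast
      nlinarith [mul_nonneg (hp 0) hε]

/-! ### From codebooks to quantizers -/

/-- Domination of the summands of mutual information: `a = P(x, y)`, `w = P(y)`, `P = P(x)`. -/
lemma abs_mi_term_le {a w P : ℝ} (ha : 0 ≤ a) (haw : a ≤ w) (hP : 0 ≤ P) (hP1 : P ≤ 1)
    (hPa : P = 0 → a = 0) :
    |a * Real.log (a / (P * w))| ≤ w * (1 + |Real.log P|) := by
  have hw : 0 ≤ w := ha.trans haw
  have hA : 0 ≤ |Real.log P| := abs_nonneg _
  rw [abs_le]
  constructor
  · have h := sub_le_mul_log ha (mul_nonneg hP hw) (fun h => by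
      rcases mul_eq_zero.1 h with h | h
      · exact hPa h
      · linarith)
    nlinarith [mul_nonneg hw hA, mul_nonneg hw (sub_nonneg.2 hP1)]
  · rcases ha.eq_or_lt with h0 | h0
    · rw [← h0, zero_mul]; positivity
    have hP0 : 0 < P := lt_of_le_of_ne hP fun h => h0.ne' (hPa h.symm)
    have hw0 : 0 < w := h0.trans_le haw
    have h1 : Real.log (a / (P * w)) ≤ |Real.log P| := by
      rw [← abs_neg, ← Real.log_inv]
      refine le_trans ?_ (le_abs_self _)
      refine Real.log_le_log (by positivity) ?_
      rw [div_le_iff₀ (by positivity)]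
      have : P⁻¹ * (P * w) = w := by field_simp
      linarith
    nlinarith [mul_le_mul_of_nonneg_left h1 ha, mul_le_mul_of_nonneg_right haw hA]

lemma miBits_eq_nats {K : ℕ} {ι : Type*} (p : Fin K → ι → ℝ) :
    miBits p = (∑ x, ∑' y, p x y * Real.log (p x y / ((∑' y', p x y') * ∑ x', p x' y)))
      / Real.log 2 := by
  unfold miBits
  simp only [tsum_fintype, Real.logb, ← mul_div_assoc, tsum_div_const]
  rw [Finset.sum_div]

section Quantizer

variable {K : ℕ} {p : Fin K → ℕ → ℝ}

lemma IsJointPMF.summable_row (hp : IsJointPMF p) (x : Fin K) : Summable (p x) :=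
  hp.2.1.prod_factor x

lemma IsJointPMF.summable_col (hp : IsJointPMF p) : Summable fun y => ∑ x, p x y :=
  summable_sum fun x _ => hp.summable_row x

lemma IsJointPMF.row_nonneg (hp : IsJointPMF p) (x : Fin K) : 0 ≤ ∑' y, p x y :=
  tsum_nonneg (hp.1 x)

lemma IsJointPMF.sum_row (hp : IsJointPMF p) : ∑ x, ∑' y, p x y = 1 := by
  simpa [tsum_fintype] using hp.2.2

lemma IsJointPMF.row_le_one (hp : IsJointPMF p) (x : Fin K) : ∑' y, p x y ≤ 1 := by
  rw [← hp.sum_row]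
  exact Finset.single_le_sum (f := fun x => ∑' y, p x y) (fun i _ => hp.row_nonneg i)
    (Finset.mem_univ x)

lemma IsJointPMF.le_row (hp : IsJointPMF p) (x : Fin K) (y : ℕ) : p x y ≤ ∑' y, p x y :=
  (hp.summable_row x).le_tsum y fun j _ => hp.1 x j

lemma IsJointPMF.le_col (hp : IsJointPMF p) (x : Fin K) (y : ℕ) : p x y ≤ ∑ x, p x y :=
  Finset.single_le_sum (f := fun x => p x y) (fun i _ => hp.1 i y) (Finset.mem_univ x)

lemma IsJointPMF.summable_mi (hp : IsJointPMF p) (x : Fin K) :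
    Summable fun y => p x y * Real.log (p x y / ((∑' y', p x y') * ∑ x', p x' y)) := by
  refine Summable.of_norm_bounded (hp.summable_col.mul_right (1 + |Real.log (∑' y', p x y')|)) ?_
  intro y
  rw [Real.norm_eq_abs]
  refine abs_mi_term_le (hp.1 x y) (hp.le_col x y) (hp.row_nonneg x) (hp.row_le_one x) fun h => ?_
  exact le_antisymm (h ▸ hp.le_row x y) (hp.1 x y)

variable {M : ℕ} (f : ℕ → Fin M)

lemma IsJointPMF.summable_cell (hp : IsJointPMF p) (x : Fin K) (c : Fin M) :
    Summable fun y => if f y = c then p x y else 0 := by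
  refine Summable.of_nonneg_of_le (fun y => ?_) (fun y => ?_) (hp.summable_row x)
  · split_ifs
    exacts [hp.1 x y, le_rfl]
  · split_ifs
    exacts [le_rfl, hp.1 x y]

lemma IsJointPMF.quantJoint_nonneg (hp : IsJointPMF p) (x : Fin K) (c : Fin M) :
    0 ≤ quantJoint p f x c := by
  refine tsum_nonneg fun y => ?_
  split_ifs
  exacts [hp.1 x y, le_rfl]

/-- Expectation of a function of `f(Y)` on the event `X = x`. -/
lemma IsJointPMF.hasSum_quantJoint (hp : IsJointPMF p) (x : Fin K) (L : Fin M → ℝ) :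
    HasSum (fun y => p x y * L (f y)) (∑ c, quantJoint p f x c * L c) := by
  have h : HasSum (fun y => ∑ c, (if f y = c then p x y else 0) * L c)
      (∑ c, quantJoint p f x c * L c) :=
    hasSum_sum fun c _ => (hp.summable_cell f x c).hasSum.mul_right (L c)
  convert h using 2 with y
  simp [ite_mul]

lemma IsJointPMF.sum_quantJoint (hp : IsJointPMF p) (x : Fin K) :
    ∑ c, quantJoint p f x c = ∑' y, p x y := by
  have h := (hp.hasSum_quantJoint f x fun _ => 1).tsum_eq
  simpa using h.symm

lemma IsJointPMF.quantJoint_le_col (hp : IsJointPMF p) (x : Fin K) (c : Fin M) :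
    quantJoint p f x c ≤ ∑ x, quantJoint p f x c :=
  Finset.single_le_sum (f := fun x => quantJoint p f x c)
    (fun i _ => hp.quantJoint_nonneg f i c) (Finset.mem_univ x)

lemma IsJointPMF.quantJoint_le_row (hp : IsJointPMF p) (x : Fin K) (c : Fin M) :
    quantJoint p f x c ≤ ∑' y, p x y := by
  rw [← hp.sum_quantJoint f x]
  exact Finset.single_le_sum (f := fun c => quantJoint p f x c)
    (fun i _ => hp.quantJoint_nonneg f x i) (Finset.mem_univ c)

lemma miBits_quantJoint (hp : IsJointPMF p) :
    miBits (quantJoint p f) = (∑ x, ∑ c, quantJoint p f x c * Real.log (quantJoint p f x c /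
      ((∑' y, p x y) * ∑ x', quantJoint p f x' c))) / Real.log 2 := by
  rw [miBits_eq_nats]
  simp only [tsum_fintype, hp.sum_quantJoint f]

/-- The supremum defining `quantMI` is a genuine one. -/
lemma bddAbove_miBits_quantJoint (hp : IsJointPMF p) (M : ℕ) :
    BddAbove (Set.range fun f : ℕ → Fin M => miBits (quantJoint p f)) := by
  refine ⟨(∑ x, ∑ _c : Fin M, (1 + |Real.log (∑' y, p x y)|)) / Real.log 2, ?_⟩
  rintro _ ⟨f, rfl⟩
  dsimp only
  rw [miBits_quantJoint f hp]
  refine div_le_div_of_nonneg_right ?_ (Real.log_nonneg one_le_two)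
  refine Finset.sum_le_sum fun x _ => Finset.sum_le_sum fun c _ => ?_
  refine (le_abs_self _).trans ((abs_mi_term_le (hp.quantJoint_nonneg f x c)
    (hp.quantJoint_le_col f x c) (hp.row_nonneg x) (hp.row_le_one x) fun h => ?_).trans ?_)
  · exact le_antisymm (h ▸ hp.quantJoint_le_row f x c) (hp.quantJoint_nonneg f x c)
  · have h1 : ∑ x, quantJoint p f x c ≤ 1 := by
      rw [← hp.sum_row]
      exact Finset.sum_le_sum fun x _ => hp.quantJoint_le_row f x c
    have : 0 ≤ 1 + |Real.log (∑' y, p x y)| := by positivity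
    nlinarith

end Quantizer

lemma exists_quantizer {m k : ℕ} (hm : 4 ≤ m) {p : Fin (k + 1) → ℕ → ℝ} (hp : IsJointPMF p) :
    ∃ f : ℕ → Fin (m ^ k),
      miBits p ≤ miBits (quantJoint p f) + k * (25 / (m : ℝ) ^ 2) / Real.log 2 := by
  obtain ⟨Q, hQ0, hQ1, hQ⟩ := codebook hm k
  choose f hf using fun y => hQ (fun x => p x y) fun x => hp.1 x y
  refine ⟨f, ?_⟩
  have hlog2 : 0 < Real.log 2 := Real.log_pos one_lt_two
  rw [miBits_eq_nats, miBits_quantJoint f hp, ← add_div]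
  refine div_le_div_of_nonneg_right ?_ hlog2.le
  set ε : ℝ := k * (25 / (m : ℝ) ^ 2) with hε
  -- for fixed `y`, replace `P(x | y)` by the codeword `Q (f y)`
  have hy : ∀ y, ∑ x, p x y * Real.log (p x y / ((∑' y', p x y') * ∑ x', p x' y))
      ≤ (∑ x, p x y) * ε + ∑ x, p x y * Real.log (Q (f y) x / ∑' y', p x y') := by
    intro y
    refine le_trans (le_of_eq ?_) (add_le_add_left (hf y) _)
    rw [← Finset.sum_add_distrib]
    refine Finset.sum_congr rfl fun x _ => ?_
    rcases (hp.1 x y).eq_or_lt with h0 | h0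
    · simp [← h0]
    have hP := h0.trans_le (hp.le_row x y)
    have hw := h0.trans_le (hp.le_col x y)
    have hq := hQ0 (f y) x
    rw [← mul_add, ← Real.log_mul (by positivity) (by positivity)]
    congr 2
    field_simp
  have hL : HasSum (fun y => ∑ x, p x y * Real.log (Q (f y) x / ∑' y', p x y'))
      (∑ x, ∑ c, quantJoint p f x c * Real.log (Q c x / ∑' y', p x y')) :=
    hasSum_sum fun x _ => hp.hasSum_quantJoint f x fun c => Real.log (Q c x / ∑' y', p x y')
  have hW : HasSum (fun y => (∑ x, p x y) * ε) (1 * ε) := by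
    refine HasSum.mul_right ε ?_
    rw [← hp.sum_row]
    exact hasSum_sum fun x _ => (hp.summable_row x).hasSum
  have hI := hasSum_le hy (hasSum_sum fun x _ => (hp.summable_mi x).hasSum) (hW.add hL)
  -- Gibbs' inequality in each cell: the conditional law beats the codeword
  have hG : ∑ x, ∑ c, quantJoint p f x c * Real.log (Q c x / ∑' y', p x y')
      ≤ ∑ x, ∑ c, quantJoint p f x c * Real.log (quantJoint p f x c /
        ((∑' y, p x y) * ∑ x', quantJoint p f x' c)) := by
    rw [Finset.sum_comm, Finset.sum_comm (γ := Fin (k + 1))]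
    refine Finset.sum_le_sum fun c _ => ?_
    have hz : ∑ x, (quantJoint p f x c - (∑ x', quantJoint p f x' c) * Q c x) = 0 := by
      rw [Finset.sum_sub_distrib, ← Finset.mul_sum, hQ1, mul_one, sub_self]
    rw [← sub_nonneg, ← Finset.sum_sub_distrib, ← hz]
    refine Finset.sum_le_sum fun x _ => ?_
    have hR := hp.quantJoint_nonneg f x c
    have hr := hp.quantJoint_le_col f x c
    have hq := hQ0 c x
    refine (sub_le_mul_log hR (mul_nonneg (hR.trans hr) hq.le) fun h => ?_).trans (le_of_eq ?_)
    · rcases mul_eq_zero.1 h with h | h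
      · linarith
      · exact absurd h hq.ne'
    rcases hR.eq_or_lt with h0 | h0
    · simp [← h0]
    have hP := h0.trans_le (hp.quantJoint_le_row f x c)
    have hr0 := h0.trans_le hr
    rw [← mul_sub, ← Real.log_div (by positivity) (by positivity)]
    congr 2
    field_simp
  linarith

/-! ### The degrading cost -/

/-- For `X` uniform and `Y = X` the mutual information is `log K`, so the infimum defining `ID` is
over a nonempty set whenever `β ≤ log K`. -/
lemma exists_miBits_eq_logb {K : ℕ} (hK : 0 < K) :
    ∃ p : Fin K → ℕ → ℝ, IsJointPMF p ∧ miBits p = Real.logb 2 K := by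
  have hK0 : (0 : ℝ) < K := by exact_mod_cast hK
  have hrow : ∀ x : Fin K, HasSum (fun y : ℕ => if y = x.1 then (K : ℝ)⁻¹ else 0) (K : ℝ)⁻¹ :=
    fun x => hasSum_ite_eq _ _
  refine ⟨fun x y => if y = x.1 then (K : ℝ)⁻¹ else 0, ⟨?_, ?_, ?_⟩, ?_⟩
  · intro x y
    dsimp only
    split_ifs <;> positivity
  · rw [summable_prod_of_nonneg]
    · exact ⟨fun x => (hrow x).summable, (hasSum_fintype _).summable⟩
    · intro z
      dsimp only [Pi.zero_apply]
      split_ifs <;> positivity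
  · simp only [(hrow _).tsum_eq, tsum_fintype]
    simp [hK0.ne']
  · unfold miBits
    simp only [(hrow _).tsum_eq]
    have : ∀ x : Fin K, (∑' y : ℕ, (if y = x.1 then (K : ℝ)⁻¹ else 0) *
        Real.logb 2 ((if y = x.1 then (K : ℝ)⁻¹ else 0) /
          ((K : ℝ)⁻¹ * ∑' x' : Fin K, if y = x'.1 then (K : ℝ)⁻¹ else 0)))
        = (K : ℝ)⁻¹ * Real.logb 2 K := by
      intro x
      rw [tsum_eq_single x.1]
      · have : (∑' x' : Fin K, if x.1 = x'.1 then (K : ℝ)⁻¹ else 0) = (K : ℝ)⁻¹ := by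
          simp [tsum_fintype, ← Fin.ext_iff]
        rw [this]
        simp only [if_true]
        congr 2
        field_simp
      · intro y hy
        simp [hy]
    simp only [this]
    simp only [tsum_fintype, Finset.sum_const, Finset.card_univ, Fintype.card_fin, nsmul_eq_mul]
    field_simp

/-- Proposition 7: refined additive gap bound,
`DC(K, M) ≤ 1268 (K-1) M^{-2/(K-1)}` whenever `M^{1/(K-1)} ≥ 4` is an integer. -/
theorem degrading_cost_bound (K : ℕ) (hK : 2 ≤ K) (M m : ℕ) (hm : 4 ≤ m)
    (hMm : M = m ^ (K - 1)) :
    DC K M ≤ 1268 * ((K : ℝ) - 1) * (M : ℝ) ^ (-(2 : ℝ) / ((K : ℝ) - 1)) := by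
  obtain ⟨k, rfl⟩ : ∃ k, K = k + 1 := ⟨K - 1, by omega⟩
  have hk : (0 : ℝ) < k := by exact_mod_cast (by omega : 0 < k)
  have hm0 : (0 : ℝ) < m := by exact_mod_cast (by omega : 0 < m)
  rw [Nat.add_sub_cancel] at hMm
  subst hMm
  have hpow : ((m ^ k : ℕ) : ℝ) ^ (-(2 : ℝ) / (((k + 1 : ℕ) : ℝ) - 1)) = 1 / (m : ℝ) ^ 2 := by
    push_cast
    rw [add_sub_cancel_right, ← Real.rpow_natCast, ← Real.rpow_mul hm0.le,
      mul_div_cancel₀ _ hk.ne', Real.rpow_neg hm0.le, one_div]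
    norm_cast
  rw [hpow]
  push_cast
  rw [add_sub_cancel_right]
  have hconst : k * (25 / (m : ℝ) ^ 2) / Real.log 2 ≤ 1268 * k * (1 / (m : ℝ) ^ 2) := by
    have h2 := Real.log_two_gt_d9
    rw [div_le_iff₀ (by linarith)]
    have e : 1268 * k * (1 / (m : ℝ) ^ 2) * Real.log 2
        = k * (1 / (m : ℝ) ^ 2) * (1268 * Real.log 2) := by ring
    have e' : k * (25 / (m : ℝ) ^ 2) = k * (1 / (m : ℝ) ^ 2) * 25 := by ring
    rw [e, e']
    exact mul_le_mul_of_nonneg_left (by linarith) (by positivity)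
  refine Real.sSup_le ?_ (by positivity)
  rintro _ ⟨β, -, hβ, rfl⟩
  rw [sub_le_comm]
  obtain ⟨p₀, hp₀, hI₀⟩ := exists_miBits_eq_logb (Nat.succ_pos k)
  refine le_csInf ⟨_, p₀, hp₀, hI₀ ▸ hβ, rfl⟩ ?_
  rintro _ ⟨p, hp, hβp, rfl⟩
  obtain ⟨f, hf⟩ := exists_quantizer hm hp
  have hsup : miBits (quantJoint p f) ≤ quantMI p (m ^ k) :=
    le_ciSup (bddAbove_miBits_quantJoint hp (m ^ k)) f
  linarith
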